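/- Let M be an oriented compact connected n-manifold with non-empty boundary whose boundary components S₁,…,S_l are all π₁-injective in M, and let f : ∂M → ∂M be an orientation-preserving homeomorphism. Then cat_Am(D_f(M)) ≤ cat_Am(M) + max_{i∈{1,…,l}} ( cat_Am(S_i) + 1 ). -/

import Mathlib

open scoped Topology
open CategoryTheory

noncomputable section

/-- The closed unit disk `Dⁿ ⊆ ℝⁿ`. -/
def UnitDisk (n : ℕ) : Set (EuclideanSpace ℝ (Fin n)) := Metric.closedBall 0 1

/-- The unit sphere `Sⁿ⁻¹ ⊆ ℝⁿ` (the boundary of `Dⁿ`). -/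
def UnitSphere (n : ℕ) : Set (EuclideanSpace ℝ (Fin n)) := Metric.sphere 0 1

/-- A CW-structure on a topological space (the non-equivariant case of a `G`-CW-structure). -/
structure CWStructure (X : Type) [TopologicalSpace X] : Type 1 where
  t2 : T2Space X
  cells : ℕ → Type
  charMap : ∀ n, cells n → UnitDisk n → X
  charMap_continuous : ∀ n i, Continuous (charMap n i)
  sphere_le : ∀ n i (z : UnitDisk n), ‖(z : EuclideanSpace ℝ (Fin n))‖ = 1 →
    ∃ (m : ℕ) (_ : m < n) (j : cells m) (w : UnitDisk m),
      ‖(w : EuclideanSpace ℝ (Fin m))‖ < 1 ∧ charMap m j w = charMap n i z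
  partition : ∀ x : X, ∃! p : Σ (n : ℕ) (_ : cells n), UnitDisk n,
      ‖(p.2.2 : EuclideanSpace ℝ (Fin p.1))‖ < 1 ∧ charMap p.1 p.2.1 p.2.2 = x
  weak_topology : ∀ A : Set X, IsClosed A ↔ ∀ n i, IsClosed (charMap n i ⁻¹' A)

/-- The CW-complex has dimension at most `c`. -/
def CWStructure.DimLE {X : Type} [TopologicalSpace X] (C : CWStructure X) (c : ℕ∞) : Prop :=
  ∀ n : ℕ, c < (n : ℕ∞) → IsEmpty (C.cells n)

/-- A CW-model of the classifying space `BG`: an aspherical path-connected CW-complex with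
fundamental group isomorphic to `G`. -/
structure ClassifyingModel (G : Type) [Group G] : Type 1 where
  space : Type
  [topology : TopologicalSpace space]
  cw : CWStructure space
  pathConnected : PathConnectedSpace space
  basepoint : space
  /-- all higher homotopy groups vanish -/
  aspherical : ∀ n : ℕ, 2 ≤ n → Subsingleton (HomotopyGroup.Pi n space basepoint)
  iso : FundamentalGroup space basepoint ≃* G

attribute [instance] ClassifyingModel.topology

/-- The geometric dimension of `G`: the infimum of the dimensions of CW-models of `BG`. -/
def gd (G : Type) [Group G] : ℕ∞ :=
  sInf {c : ℕ∞ | ∃ Y : ClassifyingModel G, Y.cw.DimLE c}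

attribute [local instance] Path.Homotopic.setoid

/-- The element of the fundamental group determined by a homotopy class of loops. -/
def pathToPi1 {Y : Type} [TopologicalSpace Y] {y : Y} (p : Path.Homotopic.Quotient y y) :
    FundamentalGroup Y y :=
  FundamentalGroup.fromPath (X := TopCat.of Y) p

/-- A left-invariant finitely additive probability measure defined on all subsets of `G`. -/
structure InvariantMean (G : Type) [Group G] where
  meas : Set G → ℝ
  nonneg : ∀ A : Set G, 0 ≤ meas A
  total : meas Set.univ = 1
  additive : ∀ A B : Set G, Disjoint A B → meas (A ∪ B) = meas A + meas B
  invariant : ∀ (g : G) (A : Set G), meas ((g * ·) '' A) = meas A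

/-- A group is amenable if it admits a left-invariant mean. -/
def IsAmenable (G : Type) [Group G] : Prop := Nonempty (InvariantMean G)

/-- The condition on a member `U` of an amenable open cover: for every `y ∈ U`, the image of
`π₁(U, y) → π₁(Y, y)` is contained in an amenable subgroup. -/
def AmenableCoverCondition {Y : Type} [TopologicalSpace Y] (U : Set Y) : Prop :=
  ∀ y ∈ U, ∃ H : Subgroup (FundamentalGroup Y y), IsAmenable H ∧
    ∀ p : Path y y, (∀ t, p t ∈ U) → pathToPi1 ⟦p⟧ ∈ H

/-- The amenable category `cat_Am(Y)` of a space `Y`: the infimum of all `n` such that `Y`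
admits a cover by `n + 1` amenable open subsets. -/
def amCat (Y : Type) [TopologicalSpace Y] : ℕ∞ :=
  sInf {c : ℕ∞ | ∃ n : ℕ, c = (n : ℕ∞) ∧ ∃ U : Fin (n + 1) → Set Y,
    (∀ i, IsOpen (U i)) ∧ (∀ y : Y, ∃ i, y ∈ U i) ∧ ∀ i, AmenableCoverCondition (U i)}

/-- The amenable category of a group: `cat_Am(G) := cat_Am(BG)`. -/
def amCatGroup (G : Type) [Group G] : ℕ∞ :=
  sInf {c : ℕ∞ | ∃ Y : ClassifyingModel G, c = amCat Y.space}

/-- A subspace `S ⊆ X` is `π₁`-injective if for every basepoint in `S` the inclusion induces an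
injective map on fundamental groups, i.e. loops in `S` that are homotopic in `X` are already
homotopic in `S`. -/
def Pi1Injective {X : Type} [TopologicalSpace X] (S : Set X) : Prop :=
  ∀ (x : S) (p q : Path x x),
    (p.map continuous_subtype_val).Homotopic (q.map continuous_subtype_val) → p.Homotopic q

/-- The image of `π₁(S, x) → π₁(X, x)` (as a subset of the fundamental group of `X`). -/
def loopImageSet {X : Type} [TopologicalSpace X] (S : Set X) (x : X) :
    Set (FundamentalGroup X x) :=
  {g | ∃ p : Path x x, (∀ t, p t ∈ S) ∧ g = pathToPi1 ⟦p⟧}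

/-- The standard topological `n`-simplex. -/
def TopSimplex (n : ℕ) : Set (Fin (n + 1) → ℝ) := stdSimplex ℝ (Fin (n + 1))

/-- Singular `n`-chains on `X` with coefficients in `R`: finitely supported functions on the
set of singular `n`-simplices. -/
abbrev SingularChain (R : Type) [CommRing R] (X : Type) [TopologicalSpace X] (n : ℕ) :=
  C(TopSimplex n, X) →₀ R

/-- The `i`-th face inclusion of standard simplices. -/
def faceMap (n : ℕ) (i : Fin (n + 2)) : C(TopSimplex n, TopSimplex (n + 1)) where
  toFun x := ⟨fun j => ∑ k : Fin (n + 1), if i.succAbove k = j then (x : Fin (n + 1) → ℝ) k else 0,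
    by
      refine ⟨fun j => Finset.sum_nonneg fun k _ => ?_, ?_⟩
      · by_cases h : i.succAbove k = j
        · simpa [h] using x.2.1 k
        · simp [h]
      · rw [Finset.sum_comm]
        simp only [Finset.sum_ite_eq, Finset.mem_univ, if_true]
        exact x.2.2⟩
  continuous_toFun := by
    apply Continuous.subtype_mk
    apply continuous_pi
    intro j
    apply continuous_finset_sum
    intro k _
    by_cases h : i.succAbove k = j
    · simp only [if_pos h]
      exact (continuous_apply k).comp continuous_subtype_val
    · simpa [h] using continuous_const

variable {R : Type} [CommRing R] {X Y : Type} [TopologicalSpace X] [TopologicalSpace Y]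

/-- The boundary operator on singular chains. -/
def chainBoundary {n : ℕ} (c : SingularChain R X (n + 1)) : SingularChain R X n :=
  c.sum fun σ r =>
    ∑ i : Fin (n + 2), (r * (-1) ^ (i : ℕ)) • Finsupp.single (σ.comp (faceMap n i)) (1 : R)

/-- The boundary operator, lowering the degree by one (with `∂ = 0` in degree `0`). -/
def chainBoundaryFrom : ∀ n, SingularChain R X n → SingularChain R X (n - 1)
  | 0, _ => 0
  | _ + 1, c => chainBoundary c

/-- The pushforward of singular chains along a continuous map. -/
def chainMap (f : C(X, Y)) {n : ℕ} (c : SingularChain R X n) : SingularChain R Y n :=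
  c.sum fun σ r => Finsupp.single (f.comp σ) r

/-- The inclusion of a subspace as a continuous map. -/
def subInc {X : Type} [TopologicalSpace X] (A : Set X) : C(A, X) :=
  ⟨Subtype.val, continuous_subtype_val⟩

/-- The chains on `X` supported on the subspace `A`. -/
def chainsOn (A : Set X) (n : ℕ) : Set (SingularChain R X n) :=
  Set.range fun c : SingularChain R A n => chainMap (subInc A) c

/-- A relative `n`-cycle of `(X, A)`. -/
def IsRelCycle (A : Set X) : ∀ n, SingularChain R X n → Prop
  | 0, _ => True
  | n + 1, c => chainBoundary c ∈ chainsOn A n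

/-- Two relative `n`-cycles define the same class in `H_n(X, A; R)`. -/
def RelHomologous (A : Set X) (n : ℕ) (c d : SingularChain R X n) : Prop :=
  ∃ b : SingularChain R X (n + 1), ∃ a ∈ chainsOn (R := R) A n, c - d = chainBoundary b + a

/-- The `ℓ¹`-norm `|c|₁ = ∑_σ |a_σ|` of a real singular chain `c = ∑_σ a_σ · σ`. -/
def chainNorm {n : ℕ} (c : SingularChain ℝ X n) : ℝ :=
  c.sum fun _ r => |r|

/-- Extension of coefficients `ℤ → ℝ` on singular chains. -/
def chainExt {n : ℕ} (c : SingularChain ℤ X n) : SingularChain ℝ X n :=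
  Finsupp.mapRange (fun k : ℤ => (k : ℝ)) (by norm_num) c

/-- The halfspace `{x : ℝⁿ | x₀ ≥ 0}` (all of `ℝ⁰` for `n = 0`). -/
def HalfSpace (n : ℕ) : Set (Fin n → ℝ) := {x | ∀ h : 0 < n, 0 ≤ x ⟨0, h⟩}

/-- The boundary `{x₀ = 0}` of the halfspace. -/
def HalfSpaceBoundary (n : ℕ) : Set (Fin n → ℝ) := {x | ∃ h : 0 < n, x ⟨0, h⟩ = 0}

/-- An oriented compact connected topological `n`-manifold with (possibly empty) boundary.
The orientation is recorded by an integral relative fundamental cycle `fundClass`, i.e. a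
relative cycle whose class generates `H_n(M, ∂M; ℤ) ≅ ℤ` (for a compact connected `n`-manifold,
such a generator exists if and only if the manifold is orientable, and the choice of generator
is exactly the choice of orientation). -/
structure OCCManifold (n : ℕ) : Type 1 where
  carrier : Type
  [topology : TopologicalSpace carrier]
  boundary : Set carrier
  t2 : T2Space carrier
  compact : CompactSpace carrier
  connected : ConnectedSpace carrier
  /-- every point has a halfspace chart, which detects the boundary -/
  charts : ∀ x : carrier, ∃ (U : Set carrier) (V : Set (HalfSpace n)) (φ : U ≃ₜ V),
    x ∈ U ∧ IsOpen U ∧ IsOpen V ∧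
    ∀ y : U, ((y : carrier) ∈ boundary ↔
      ((φ y : HalfSpace n) : Fin n → ℝ) ∈ HalfSpaceBoundary n)
  fundClass : SingularChain ℤ carrier n
  fundClass_cycle : IsRelCycle boundary n fundClass
  fundClass_gen : ∀ c : SingularChain ℤ carrier n, IsRelCycle boundary n c →
    ∃ k : ℤ, RelHomologous boundary n c (k • fundClass)
  fundClass_ord : ∀ k : ℤ, RelHomologous boundary n (k • fundClass) 0 → k = 0

attribute [instance] OCCManifold.topology

/-- A real relative fundamental cycle of `(M, ∂M)`: a real relative cycle representing the image
of the integral fundamental class under the change of coefficients `ℤ → ℝ`. -/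
def IsFundamentalCycle {n : ℕ} (M : OCCManifold n) (c : SingularChain ℝ M.carrier n) : Prop :=
  IsRelCycle M.boundary n c ∧ RelHomologous M.boundary n c (chainExt M.fundClass)

/-- The (relative) simplicial volume `‖M, ∂M‖`: the infimum of the `ℓ¹`-norms of the real
relative fundamental cycles of `(M, ∂M)`.  For closed `M` this is the simplicial volume `‖M‖`. -/
def simVol {n : ℕ} (M : OCCManifold n) : ℝ :=
  sInf {r : ℝ | ∃ c : SingularChain ℝ M.carrier n, IsFundamentalCycle M c ∧ r = chainNorm c}

/-- `S` is a boundary component of `M`, i.e. a connected component of `∂M`. -/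
def IsBoundaryComponent {n : ℕ} (M : OCCManifold n) (S : Set M.carrier) : Prop :=
  ∃ x ∈ M.boundary, S = connectedComponentIn M.boundary x

open scoped Classical in
/-- `z` is a fundamental cycle for the induced orientation on the part `S` of the boundary of
`M`: a cycle on `S` which, pushed into `M`, is the part of `∂(fundClass)` supported on `S`. -/
def IsInducedBoundaryCycle {n : ℕ} (M : OCCManifold n) (S : Set M.carrier)
    (z : SingularChain ℤ S (n - 1)) : Prop :=
  IsRelCycle (∅ : Set S) (n - 1) z ∧
    chainMap (subInc S) z =
      (chainBoundaryFrom n M.fundClass).filter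
        (fun σ : C(TopSimplex (n - 1), M.carrier) => ∀ t, σ t ∈ S)

/-- `h` carries the induced orientation of `S ⊆ ∂M` to `sign` times the induced orientation of
`T ⊆ ∂N`: with `sign = 1` this says that `h` is orientation-preserving, and with `sign = -1`
that `h` is orientation-reversing. -/
def OrientationCompatible {n : ℕ} (sign : ℤ) (M N : OCCManifold n)
    {S : Set M.carrier} {T : Set N.carrier} (h : S ≃ₜ T) : Prop :=
  ∀ z w, IsInducedBoundaryCycle M S z → IsInducedBoundaryCycle N T w →
    RelHomologous (∅ : Set T) (n - 1)
      (chainMap ⟨h, h.continuous_toFun⟩ z) (sign • w)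

/-- The twisted double `D_f(M) = M ∪_f (−M)`, presented as a closed manifold together with the
two copies of `M` and the quotient description of the gluing along `f`. -/
structure TwistedDouble {n : ℕ} (M : OCCManifold n) (f : M.boundary ≃ₜ M.boundary) : Type 1 where
  double : OCCManifold n
  closed : double.boundary = ∅
  /-- the copy of `M` -/
  embp : C(M.carrier, double.carrier)
  /-- the copy of `−M` -/
  embm : C(M.carrier, double.carrier)
  quotient : Topology.IsQuotientMap (Sum.elim embp embm : M.carrier ⊕ M.carrier → double.carrier)
  identifications : ∀ a b : M.carrier ⊕ M.carrier,
    Sum.elim embp embm a = Sum.elim embp embm b ↔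
      Relation.EqvGen (fun p q : M.carrier ⊕ M.carrier =>
        ∃ z : M.boundary, p = Sum.inl (z : M.carrier) ∧
          q = Sum.inr ((f z : M.boundary) : M.carrier)) a b


/-- Quotients of amenable groups are amenable. -/
theorem IsAmenable.of_surjective {G H : Type} [Group G] [Group H] (φ : G →* H)
    (hs : Function.Surjective φ) (h : IsAmenable G) : IsAmenable H := by
  obtain ⟨m⟩ := h
  refine ⟨⟨fun A => m.meas (φ ⁻¹' A), fun A => m.nonneg _, ?_, ?_, ?_⟩⟩
  · simpa using m.total
  · intro A B hAB
    rw [Set.preimage_union]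
    exact m.additive _ _ (hAB.preimage φ)
  · intro g A
    obtain ⟨g', rfl⟩ := hs g
    rw [← m.invariant g' (φ ⁻¹' A)]
    congr 1
    ext x
    simp only [Set.mem_preimage, Set.mem_image]
    constructor
    · rintro ⟨a, ha, hax⟩
      refine ⟨g'⁻¹ * x, ?_, by simp⟩
      simpa [← hax] using ha
    · rintro ⟨a, ha, rfl⟩
      exact ⟨φ a, ha, by simp⟩

/-- The homomorphism on fundamental groups induced by a map and a change of base point. -/
def conjHom {A E : Type} [TopologicalSpace A] [TopologicalSpace E] (φ : C(A, E)) (a : A) (y : E)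
    (γ : Path y (φ a)) : FundamentalGroup A a →* FundamentalGroup E y :=
  MonoidHom.mk' (fun g : Path.Homotopic.Quotient a a =>
    ((Path.Homotopic.Quotient.mk γ).trans
      ((Path.Homotopic.Quotient.map g φ).trans (Path.Homotopic.Quotient.mk γ.symm)) :
        Path.Homotopic.Quotient y y)) (by
    intro g h
    induction g using Path.Homotopic.Quotient.ind with | _ p
    induction h using Path.Homotopic.Quotient.ind with | _ q
    change Path.Homotopic.Quotient.trans _ (Path.Homotopic.Quotient.trans
      (Path.Homotopic.Quotient.map (Path.Homotopic.Quotient.mk (q.trans p)) φ) _) =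
      Path.Homotopic.Quotient.trans
        (Path.Homotopic.Quotient.trans _ (Path.Homotopic.Quotient.trans _ _))
        (Path.Homotopic.Quotient.trans _ (Path.Homotopic.Quotient.trans _ _))
    have key : Path.Homotopic.Quotient.map (Path.Homotopic.Quotient.mk (q.trans p)) φ =
        (Path.Homotopic.Quotient.mk (q.map φ.continuous)).trans
          (Path.Homotopic.Quotient.mk (p.map φ.continuous)) := by
      rw [← Path.Homotopic.Quotient.mk_map, Path.map_trans, Path.Homotopic.Quotient.mk_trans]
    rw [key]
    simp only [← Path.Homotopic.Quotient.mk_map, Path.Homotopic.Quotient.trans_assoc,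
      Path.Homotopic.Quotient.mk_symm]
    rw [← Path.Homotopic.Quotient.trans_assoc (Path.Homotopic.Quotient.mk γ).symm]
    simp)

/-- Transfer of the amenability condition along a map, up to homotopy. -/
theorem amenable_transfer {A E : Type} [TopologicalSpace A] [TopologicalSpace E] (φ : C(A, E))
    (V : Set A) (hV : AmenableCoverCondition V) (a : A) (ha : a ∈ V) (U : Set E) (y : E)
    (γ : Path y (φ a))
    (h : ∀ p : Path y y, (∀ t, p t ∈ U) → ∃ q : Path a a, (∀ t, q t ∈ V) ∧
      p.Homotopic (γ.trans ((q.map φ.continuous).trans γ.symm))) :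
    ∃ H : Subgroup (FundamentalGroup E y), IsAmenable H ∧
      ∀ p : Path y y, (∀ t, p t ∈ U) → pathToPi1 ⟦p⟧ ∈ H := by
  obtain ⟨H, hH, hp⟩ := hV a ha
  refine ⟨H.map (conjHom φ a y γ), ?_, ?_⟩
  · exact IsAmenable.of_surjective ((conjHom φ a y γ).subgroupMap H)
      ((conjHom φ a y γ).subgroupMap_surjective H) hH
  · intro p hpU
    obtain ⟨q, hqV, hq⟩ := h p hpU
    refine ⟨_, hp q hqV, ?_⟩
    exact (Path.Homotopic.Quotient.eq.2 hq).symm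

/-- Uniform local path connectedness near a compact set. -/
theorem uniform_joined {E : Type} [MetricSpace E] [LocallyPathConnectedSpace E] {K : Set E}
    (hK : IsCompact K) {δ : ℝ} (hδ : 0 < δ) :
    ∃ ε > 0, ∀ k ∈ K, ∀ y, dist y k < ε → JoinedIn (Metric.ball k δ) y k := by
  obtain ⟨ε, hε, h⟩ := lebesgue_number_lemma_of_metric (s := K)
    (c := fun k : E => pathComponentIn (Metric.ball k (δ / 2)) k) hK
    (fun k => Metric.isOpen_ball.pathComponentIn k)
    (fun k _ => Set.mem_iUnion.2 ⟨k, mem_pathComponentIn_self (by simp [hδ])⟩)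
  refine ⟨ε, hε, fun k hk y hy => ?_⟩
  obtain ⟨k', hk'⟩ := h k hk
  have h1 : JoinedIn (Metric.ball k' (δ / 2)) k' k := hk' (by simp [hε])
  have h2 : JoinedIn (Metric.ball k' (δ / 2)) k' y := hk' (by simpa using hy)
  refine (h2.symm.trans h1).mono ?_
  intro z hz
  have h3 := h1.target_mem
  rw [Metric.mem_ball] at *
  have h4 := dist_triangle_right z k k'
  linarith only [h4, hz, h3]

/-- Paths in `O` with the same end points are homotopic in the ambient space. -/
def HtpyUnique {E : Type} [TopologicalSpace E] (O : Set E) : Prop :=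
  ∀ (a b : E) (p q : Path a b), (∀ t, p t ∈ O) → (∀ t, q t ∈ O) → p.Homotopic q

/-- A property of paths (with values in `U`) which holds for short paths and is stable under
concatenation and homotopy holds for all paths. -/
theorem path_induction {E : Type} [MetricSpace E] (U : Set E)
    (P : ∀ (y y' : U), Path (y : E) (y' : E) → Prop) {δ : ℝ} (hδ : 0 < δ)
    (hshort : ∀ (y y' : U) (p : Path (y : E) (y' : E)), (∀ t, p t ∈ U) →
      (∀ t, dist (p t) y < δ) → P y y' p)
    (htrans : ∀ (y y' y'' : U) (p : Path (y : E) (y' : E)) (q : Path (y' : E) (y'' : E))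
      (r : Path (y : E) (y'' : E)), (p.trans q).Homotopic r → P y y' p → P y' y'' q → P y y'' r)
    (y y' : U) (p : Path (y : E) (y' : E)) (hp : ∀ t, p t ∈ U) : P y y' p := by
  have huc : UniformContinuous p := CompactSpace.uniformContinuous_of_continuous p.continuous
  obtain ⟨η, hη, hη'⟩ := Metric.uniformContinuous_iff.1 huc δ hδ
  obtain ⟨N, hN⟩ := exists_nat_one_div_lt hη
  let s : ℕ → unitInterval := fun i => Set.projIcc 0 1 zero_le_one ((i : ℝ) / (N + 1))
  have hs : ∀ i, dist (s i) (s (i + 1)) < η := by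
    intro i
    refine lt_of_le_of_lt ?_ hN
    have := Set.abs_projIcc_sub_projIcc (zero_le_one (α := ℝ)) (c := (i : ℝ) / (N + 1))
      (d := ((i + 1 : ℕ) : ℝ) / (N + 1))
    rw [Subtype.dist_eq, Real.dist_eq]
    refine this.trans (le_of_eq ?_)
    rw [← sub_div, abs_div, Nat.cast_add, Nat.cast_one, sub_add_cancel_left, abs_neg, abs_one,
      abs_of_pos (by positivity)]
  have hmono : Monotone s := by
    intro i j hij
    apply Set.monotone_projIcc
    gcongr
  have hsub : ∀ a b c : unitInterval, p.subpath a b c ∈ U := fun a b c => hp _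
  have main : ∀ i, P ⟨p 0, hp 0⟩ ⟨p (s i), hp _⟩ (p.subpath 0 (s i)) := by
    intro i
    induction i with
    | zero =>
      have h0 : s 0 = 0 := by
        simp only [s, Nat.cast_zero, zero_div]
        exact Set.projIcc_left _
      apply hshort _ _ _ (hsub _ _)
      intro t
      have : p.subpath 0 (s 0) t ∈ Set.range (p.subpath 0 (s 0)) := ⟨t, rfl⟩
      rw [Path.range_subpath] at this
      obtain ⟨u, hu, hu'⟩ := this
      rw [h0, Set.uIcc_self] at hu
      rw [← hu', Set.mem_singleton_iff.1 hu]
      simpa using hδ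
    | succ i ih =>
      refine htrans _ ⟨p (s i), hp _⟩ _ (p.subpath 0 (s i)) (p.subpath (s i) (s (i + 1))) _
        ⟨Path.Homotopy.subpathTransSubpath p _ _ _⟩ ih ?_
      apply hshort _ _ _ (hsub _ _)
      intro t
      have : p.subpath (s i) (s (i + 1)) t ∈ Set.range (p.subpath (s i) (s (i + 1))) := ⟨t, rfl⟩
      rw [Path.range_subpath_of_le _ _ _ (hmono (Nat.le_succ i))] at this
      obtain ⟨u, hu, hu'⟩ := this
      rw [← hu']
      apply hη'
      refine lt_of_le_of_lt ?_ (hs i)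
      rw [Subtype.dist_eq, Subtype.dist_eq, Real.dist_eq, Real.dist_eq]
      have h1 : (s i : ℝ) ≤ u := hu.1
      have h2 : (u : ℝ) ≤ s (i + 1) := hu.2
      rw [abs_of_nonneg (by linarith), abs_of_nonpos (by linarith)]
      linarith
  have h1 := main (N + 1)
  have hs1 : s (N + 1) = 1 := by
    have : (((N + 1 : ℕ) : ℝ) / (N + 1)) = 1 := by
      push_cast
      field_simp
    simp only [s, this]
    exact Set.projIcc_right _
  rw [hs1, Path.subpath_zero_one] at h1
  obtain ⟨y, hy⟩ := y
  obtain ⟨y', hy'⟩ := y'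
  have e0 : p 0 = y := p.source
  have e1 : p 1 = y' := p.target
  have gen : ∀ (z z' : E) (hz : z ∈ U) (hz' : z' ∈ U) (e : z = y) (e' : z' = y'),
      P ⟨z, hz⟩ ⟨z', hz'⟩ (p.cast e e') → P ⟨y, hy⟩ ⟨y', hy'⟩ p := by
    rintro z z' hz hz' rfl rfl h
    exact h
  exact gen _ _ _ _ e0 e1 h1

/-- Loops near a compact subset of a nicely embedded subspace can be pushed into the subspace. -/
theorem thicken {E B : Type} [MetricSpace E] [LocallyPathConnectedSpace E] [TopologicalSpace B]
    [LocallyPathConnectedSpace B] (φ : C(B, E)) (hφ : Topology.IsEmbedding φ)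
    (hE : ∀ x : E, ∃ O : Set E, IsOpen O ∧ x ∈ O ∧ HtpyUnique O)
    (K W : Set B) (hK : IsCompact K) (hKW : K ⊆ W) (hW : IsOpen W) :
    ∃ U : Set E, IsOpen U ∧ φ '' K ⊆ U ∧ ∀ y ∈ U, ∃ b ∈ W, ∃ γ : Path y (φ b),
      ∀ p : Path y y, (∀ t, p t ∈ U) → ∃ q : Path b b, (∀ t, q t ∈ W) ∧
        p.Homotopic (γ.trans ((q.map φ.continuous).trans γ.symm)) := by
  classical
  -- good open sets
  have hgood : ∀ k : K, ∃ Q : Set E, IsOpen Q ∧ φ k ∈ Q ∧ ∃ O : Set E, Q ⊆ O ∧ HtpyUnique O ∧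
      ∀ b b' : B, φ b ∈ Q → φ b' ∈ Q → ∃ q : Path b b', (∀ t, q t ∈ W) ∧ ∀ t, φ (q t) ∈ O := by
    rintro ⟨k, hk⟩
    obtain ⟨O, hO, hkO, hOu⟩ := hE (φ k)
    have hop : IsOpen (pathComponentIn (W ∩ φ ⁻¹' O) k) :=
      (hW.inter (hO.preimage φ.continuous)).pathComponentIn k
    obtain ⟨Q, hQ, hQe⟩ := hφ.isInducing.isOpen_iff.1 hop
    have hkQ : k ∈ φ ⁻¹' Q := by
      rw [hQe]
      exact mem_pathComponentIn_self ⟨hKW hk, hkO⟩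
    refine ⟨Q ∩ O, hQ.inter hO, ⟨hkQ, hkO⟩, O, Set.inter_subset_right, hOu, ?_⟩
    rintro b b' ⟨hb, -⟩ ⟨hb', -⟩
    have h1 : b ∈ pathComponentIn (W ∩ φ ⁻¹' O) k := hQe ▸ hb
    have h2 : b' ∈ pathComponentIn (W ∩ φ ⁻¹' O) k := hQe ▸ hb'
    have h3 : JoinedIn (W ∩ φ ⁻¹' O) b b' := JoinedIn.trans (JoinedIn.symm h1) h2
    exact ⟨h3.somePath, fun t => (h3.somePath_mem t).1, fun t => (h3.somePath_mem t).2⟩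
  choose Q hQo hkQ O hQO hOu hQp using hgood
  have hKc : IsCompact (φ '' K) := hK.image φ.continuous
  obtain ⟨δ, hδ, hδQ⟩ := lebesgue_number_lemma_of_metric hKc hQo (by
    rintro _ ⟨k, hk, rfl⟩
    exact Set.mem_iUnion.2 ⟨⟨k, hk⟩, hkQ _⟩)
  obtain ⟨ε', hε', hj⟩ := uniform_joined hKc (δ := δ / 6) (by positivity)
  obtain ⟨ε, hε, hεε', hεδ⟩ : ∃ ε > 0, ε ≤ ε' ∧ ε ≤ δ / 6 :=
    ⟨min ε' (δ / 6), by positivity, min_le_left _ _, min_le_right _ _⟩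
  let U : Set E := Metric.thickening ε (φ '' K)
  have hr : ∀ y : U, ∃ k ∈ K, dist (y : E) (φ k) < ε := by
    rintro ⟨y, hy⟩
    obtain ⟨_, ⟨k, hk, rfl⟩, h⟩ := Metric.mem_thickening_iff.1 hy
    exact ⟨k, hk, h⟩
  choose r hrK hr using hr
  have hg : ∀ y : U, ∃ γ : Path (y : E) (φ (r y)), ∀ t, γ t ∈ Metric.ball (φ (r y)) (δ / 6) := by
    intro y
    have := hj (φ (r y)) ⟨_, hrK y, rfl⟩ y ((hr y).trans_le hεε')
    exact ⟨this.somePath, this.somePath_mem⟩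
  choose γ hγ using hg
  refine ⟨U, Metric.isOpen_thickening, Metric.self_subset_thickening hε _, ?_⟩
  intro y hy
  refine ⟨r ⟨y, hy⟩, hKW (hrK _), γ ⟨y, hy⟩, ?_⟩
  intro p hp
  refine path_induction U (fun y y' p => ∃ q : Path (r y) (r y'), (∀ t, q t ∈ W) ∧
        p.Homotopic ((γ y).trans ((q.map φ.continuous).trans (γ y').symm))) (δ := δ / 6)
        (by positivity) ?_ ?_ ⟨y, hy⟩ ⟨y, hy⟩ p hp
  · clear hp p hy y
    intro y y' p hpU hps
    obtain ⟨k, hk⟩ := hδQ (φ (r y)) ⟨_, hrK y, rfl⟩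
    have hpQ : ∀ z, dist z (y : E) < 4 * (δ / 6) → z ∈ Q k := by
      intro z hz
      apply hk
      rw [Metric.mem_ball]
      linarith [dist_triangle z y (φ (r y)), hr y]
    have hyy' : dist (y' : E) y < δ / 6 := by simpa using hps 1
    have hry : φ (r y) ∈ Q k := by
      apply hpQ
      rw [dist_comm]
      linarith [hr y]
    have hry' : dist (φ (r y')) (y : E) < 2 * (δ / 6) := by
      have := hr y'
      rw [dist_comm] at this
      linarith [dist_triangle (φ (r y')) y' y]
    obtain ⟨q, hqW, hqO⟩ := hQp k (r y) (r y') hry (hpQ _ (by linarith))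
    refine ⟨q, hqW, hOu k _ _ _ _ (fun t => hQO k (hpQ _ (by linarith [hps t]))) ?_⟩
    have hg1 : ∀ t, γ y t ∈ O k := by
      intro t
      apply hQO
      apply hk
      have := hγ y t
      rw [Metric.mem_ball] at this ⊢
      linarith
    have hg2 : ∀ t, (γ y').symm t ∈ O k := by
      intro t
      apply hQO
      apply hpQ
      have := hγ y' (unitInterval.symm t)
      rw [Metric.mem_ball] at this
      have h3 := dist_triangle (γ y' (unitInterval.symm t)) (φ (r y')) y
      change dist (γ y' (unitInterval.symm t)) (y : E) < _
      linarith
    have hq' : ∀ t, (q.map φ.continuous) t ∈ O k := hqO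
    intro t
    have : ((γ y).trans ((q.map φ.continuous).trans (γ y').symm)) t ∈
      Set.range ((γ y).trans ((q.map φ.continuous).trans (γ y').symm)) := ⟨t, rfl⟩
    rw [Path.trans_range, Path.trans_range] at this
    rcases this with ⟨s, hs⟩ | ⟨s, hs⟩ | ⟨s, hs⟩
    · rw [← hs]; exact hg1 s
    · rw [← hs]; exact hq' s
    · rw [← hs]; exact hg2 s
  · clear hp p hy y
    rintro y y' y'' p p' s hs ⟨q, hqW, hq⟩ ⟨q', hqW', hq'⟩
    refine ⟨q.trans q', ?_, ?_⟩
    · intro t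
      have : (q.trans q') t ∈ Set.range (q.trans q') := ⟨t, rfl⟩
      rw [Path.trans_range] at this
      rcases this with ⟨s, hs⟩ | ⟨s, hs⟩
      · rw [← hs]; exact hqW s
      · rw [← hs]; exact hqW' s
    · refine hs.symm.trans ((hq.hcomp hq').trans ?_)
      rw [← Path.Homotopic.Quotient.eq]
      simp only [Path.map_trans,
        Path.Homotopic.Quotient.mk_trans, Path.Homotopic.Quotient.trans_assoc,
        Path.Homotopic.Quotient.mk_symm]
      rw [← Path.Homotopic.Quotient.trans_assoc (Path.Homotopic.Quotient.mk (γ y')).symm]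
      simp

theorem thicken_metrizable {E B : Type} [TopologicalSpace E] [TopologicalSpace.MetrizableSpace E]
    [LocallyPathConnectedSpace E] [TopologicalSpace B]
    [LocallyPathConnectedSpace B] (φ : C(B, E)) (hφ : Topology.IsEmbedding φ)
    (hE : ∀ x : E, ∃ O : Set E, IsOpen O ∧ x ∈ O ∧ HtpyUnique O)
    (K W : Set B) (hK : IsCompact K) (hKW : K ⊆ W) (hW : IsOpen W) :
    ∃ U : Set E, IsOpen U ∧ φ '' K ⊆ U ∧ ∀ y ∈ U, ∃ b ∈ W, ∃ γ : Path y (φ b),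
      ∀ p : Path y y, (∀ t, p t ∈ U) → ∃ q : Path b b, (∀ t, q t ∈ W) ∧
        p.Homotopic (γ.trans ((q.map φ.continuous).trans γ.symm)) := by
  let _ := TopologicalSpace.metrizableSpaceMetric E
  exact thicken φ hφ hE K W hK hKW hW

theorem convex_halfSpace (n : ℕ) : Convex ℝ (HalfSpace n) := by
  intro x hx y hy a b ha hb _ h
  have h1 := hx h
  have h2 := hy h
  simp only [Pi.add_apply, Pi.smul_apply, smul_eq_mul]
  positivity

theorem convex_halfSpaceBoundary (n : ℕ) : Convex ℝ (HalfSpaceBoundary n) := by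
  rintro x ⟨h, hx⟩ y ⟨_, hy⟩ a b _ _ _
  refine ⟨h, ?_⟩
  simp [hx, hy]

theorem isClosed_halfSpaceBoundary (n : ℕ) : IsClosed (HalfSpaceBoundary n) := by
  by_cases h : 0 < n
  · have : HalfSpaceBoundary n = {x | x ⟨0, h⟩ = 0} := by
      ext x
      exact ⟨fun ⟨_, hx⟩ => hx, fun hx => ⟨h, hx⟩⟩
    rw [this]
    exact isClosed_eq (continuous_apply _) continuous_const
  · have : HalfSpaceBoundary n = ∅ := by
      ext x
      exact ⟨fun ⟨h', _⟩ => (h h').elim, fun hx => hx.elim⟩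
    rw [this]
    exact isClosed_empty

/-- Charts of a manifold with convex domain. -/
theorem chart_convex {n : ℕ} (M : OCCManifold n) (x : M.carrier) :
    ∃ (C : Set (Fin n → ℝ)) (g : C → M.carrier), Convex ℝ C ∧ Topology.IsOpenEmbedding g ∧
      x ∈ Set.range g ∧ ∀ c : C, g c ∈ M.boundary ↔ (c : Fin n → ℝ) ∈ HalfSpaceBoundary n := by
  obtain ⟨U, V, e, hxU, hU, hV, hbd⟩ := M.charts x
  obtain ⟨V0, hV0, rfl⟩ := isOpen_induced_iff.1 hV
  have hx0 : (((e ⟨x, hxU⟩ : _) : HalfSpace n) : Fin n → ℝ) ∈ V0 := (e ⟨x, hxU⟩).2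
  obtain ⟨r, hr, hball⟩ := Metric.isOpen_iff.1 hV0 _ hx0
  set x0 : Fin n → ℝ := (((e ⟨x, hxU⟩ : _) : HalfSpace n) : Fin n → ℝ) with hx0def
  let C : Set (Fin n → ℝ) := Metric.ball x0 r ∩ HalfSpace n
  let i : C → ((Subtype.val ⁻¹' V0 : Set (HalfSpace n)) : Set (HalfSpace n)) :=
    fun c => ⟨⟨c.1, c.2.2⟩, hball c.2.1⟩
  have hi : Topology.IsOpenEmbedding i := by
    refine ⟨?_, ?_⟩
    · have hc : Continuous i := by fun_prop
      refine Topology.IsEmbedding.of_comp hc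
        (continuous_subtype_val.comp continuous_subtype_val) ?_
      exact Topology.IsEmbedding.subtypeVal
    · have : Set.range i = (fun v : (Subtype.val ⁻¹' V0 : Set (HalfSpace n)) =>
          ((v : HalfSpace n) : Fin n → ℝ)) ⁻¹' Metric.ball x0 r := by
        ext v
        constructor
        · rintro ⟨c, rfl⟩
          exact c.2.1
        · intro hv
          exact ⟨⟨v.1.1, hv, v.1.2⟩, rfl⟩
      rw [this]
      exact Metric.isOpen_ball.preimage (continuous_subtype_val.comp continuous_subtype_val)
  refine ⟨C, fun c => (e.symm (i c) : M.carrier), (convex_ball _ _).inter (convex_halfSpace n),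
    ?_, ?_, ?_⟩
  · exact hU.isOpenEmbedding_subtypeVal.comp (e.symm.isOpenEmbedding.comp hi)
  · refine ⟨⟨x0, by simp [hr], (e ⟨x, hxU⟩).1.2⟩, ?_⟩
    have : i ⟨x0, by simp [hr], (e ⟨x, hxU⟩).1.2⟩ = e ⟨x, hxU⟩ := rfl
    simp [this]
  · intro c
    rw [hbd (e.symm (i c))]
    simp [i]

theorem boundary_closed {n : ℕ} (M : OCCManifold n) : IsClosed M.boundary := by
  rw [← isOpen_compl_iff, isOpen_iff_mem_nhds]
  intro x hx
  obtain ⟨C, g, -, hg, ⟨c, rfl⟩, hb⟩ := chart_convex M x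
  have ho : IsOpen (g '' {c | (c : Fin n → ℝ) ∈ (HalfSpaceBoundary n)ᶜ}) :=
    hg.isOpenMap _ ((isClosed_halfSpaceBoundary n).isOpen_compl.preimage continuous_subtype_val)
  refine Filter.mem_of_superset (ho.mem_nhds ⟨c, fun h => hx ((hb c).2 h), rfl⟩) ?_
  rintro _ ⟨c, hc, rfl⟩ h
  exact hc ((hb c).1 h)

theorem locallyPathConnected_of_charts {E : Type} [TopologicalSpace E] {n : ℕ}
    (h : ∀ x : E, ∃ (C : Set (Fin n → ℝ)) (g : C → E), Convex ℝ C ∧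
      Topology.IsOpenEmbedding g ∧ x ∈ Set.range g) : LocallyPathConnectedSpace E := by
  rw [locallyPathConnectedSpace_iff_pathComponentIn_mem_nhds]
  intro x u hu hxu
  obtain ⟨C, g, hC, hg, ⟨c, rfl⟩⟩ := h x
  have : LocallyPathConnectedSpace C := hC.locallyPathConnectedSpace
  have hc : c ∈ g ⁻¹' u := hxu
  have ho := hg.isOpenMap _ ((hu.preimage hg.continuous).pathComponentIn c)
  refine Filter.mem_of_superset (ho.mem_nhds ⟨c, mem_pathComponentIn_self hc, rfl⟩) ?_
  apply IsPathConnected.subset_pathComponentIn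
  · exact (isPathConnected_pathComponentIn hc).image hg.continuous
  · exact ⟨c, mem_pathComponentIn_self hc, rfl⟩
  · exact (Set.image_mono pathComponentIn_subset).trans (Set.image_preimage_subset _ _)

theorem manifold_lpc {n : ℕ} (M : OCCManifold n) : LocallyPathConnectedSpace M.carrier :=
  locallyPathConnected_of_charts (n := n) fun x => by
    obtain ⟨C, g, hC, hg, hx, -⟩ := chart_convex M x
    exact ⟨C, g, hC, hg, hx⟩

theorem boundary_lpc {n : ℕ} (M : OCCManifold n) : LocallyPathConnectedSpace M.boundary :=
  locallyPathConnected_of_charts (n := n) fun x => by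
    obtain ⟨C, g, hC, hg, ⟨c, hc⟩, hb⟩ := chart_convex M x
    let g' : (C ∩ HalfSpaceBoundary n : Set (Fin n → ℝ)) → M.boundary :=
      fun c => ⟨g ⟨c.1, c.2.1⟩, (hb _).2 c.2.2⟩
    have hcont : Continuous g' := by
      apply Continuous.subtype_mk
      exact hg.continuous.comp (by fun_prop)
    refine ⟨_, g', hC.inter (convex_halfSpaceBoundary n), ⟨?_, ?_⟩, ?_⟩
    · refine Topology.IsEmbedding.of_comp hcont continuous_subtype_val ?_
      exact hg.isEmbedding.comp (Topology.IsEmbedding.inclusion Set.inter_subset_left)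
    · have : Set.range g' = Subtype.val ⁻¹' Set.range g := by
        ext y
        constructor
        · rintro ⟨c, rfl⟩
          exact ⟨_, rfl⟩
        · rintro ⟨c, hc⟩
          refine ⟨⟨c.1, c.2, (hb c).1 (hc ▸ y.2)⟩, Subtype.ext hc⟩
      rw [this]
      exact hg.isOpen_range.preimage continuous_subtype_val
    · exact ⟨⟨c.1, c.2, (hb c).1 (hc ▸ x.2)⟩, Subtype.ext hc⟩

theorem manifold_metrizable {n : ℕ} (M : OCCManifold n) :
    TopologicalSpace.MetrizableSpace M.carrier := by
  have := M.t2
  have := M.compact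
  choose C g hC hg hx hb using chart_convex M
  obtain ⟨t, ht⟩ := isCompact_univ.elim_finite_subcover (fun x => Set.range (g x))
    (fun x => (hg x).isOpen_range) (fun x _ => Set.mem_iUnion.2 ⟨x, hx x⟩)
  have : ∀ x : t, SecondCountableTopology (Set.range (g x)) := fun x =>
    (hg x).isEmbedding.toHomeomorph.symm.secondCountableTopology
  have : SecondCountableTopology M.carrier :=
    TopologicalSpace.secondCountableTopology_of_countable_cover
      (U := fun x : t => Set.range (g x)) (fun x => (hg x).isOpen_range) (by
        rw [Set.eq_univ_iff_forall]
        intro y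
        have := ht (Set.mem_univ y)
        simp only [Set.mem_iUnion] at this ⊢
        obtain ⟨i, hi, h⟩ := this
        exact ⟨⟨i, hi⟩, h⟩)
  infer_instance

theorem manifold_htpyUnique {n : ℕ} (M : OCCManifold n) (x : M.carrier) :
    ∃ O : Set M.carrier, IsOpen O ∧ x ∈ O ∧ HtpyUnique O := by
  obtain ⟨C, g, hC, hg, hx, -⟩ := chart_convex M x
  refine ⟨Set.range g, hg.isOpen_range, hx, ?_⟩
  have hne : C.Nonempty := by
    obtain ⟨c, -⟩ := hx
    exact ⟨c, c.2⟩
  have : ContractibleSpace C := hC.contractibleSpace hne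
  have : ContractibleSpace (Set.range g) :=
    hg.isEmbedding.toHomeomorph.symm.contractibleSpace
  intro a b p q hp hq
  have ha : a ∈ Set.range g := by simpa using hp 0
  have hb : b ∈ Set.range g := by simpa using hp 1
  let p' : Path (⟨a, ha⟩ : Set.range g) ⟨b, hb⟩ :=
    ⟨⟨fun t => ⟨p t, hp t⟩, by fun_prop⟩, by simp, by simp⟩
  let q' : Path (⟨a, ha⟩ : Set.range g) ⟨b, hb⟩ :=
    ⟨⟨fun t => ⟨q t, hq t⟩, by fun_prop⟩, by simp, by simp⟩
  exact (SimplyConnectedSpace.paths_homotopic p' q').map ⟨Subtype.val, continuous_subtype_val⟩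

theorem lift_loop {A E : Type} [TopologicalSpace A] [TopologicalSpace E] (φ : C(A, E))
    (hφ : Topology.IsEmbedding φ) (V : Set A) (a : A) (p : Path (φ a) (φ a))
    (hp : ∀ t, p t ∈ φ '' V) :
    ∃ q : Path a a, (∀ t, q t ∈ V) ∧ q.map φ.continuous = p := by
  choose q hqV hq using hp
  have hc : Continuous q := by
    rw [hφ.isInducing.continuous_iff]
    have : φ ∘ q = p := funext hq
    rw [this]
    exact p.continuous
  refine ⟨⟨⟨q, hc⟩, ?_, ?_⟩, hqV, ?_⟩
  · exact hφ.injective (by simp [hq])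
  · exact hφ.injective (by simp [hq])
  · ext t
    exact hq t

theorem amenable_image_aux {A E : Type} [TopologicalSpace A] [TopologicalSpace E] (φ ψ : C(A, E))
    (hφ : Topology.IsEmbedding φ) (V V' : Set A)
    (hV : AmenableCoverCondition V) (hVV' : V' ⊆ V) (hφo : IsOpen (φ '' V'))
    (hψo : IsOpen (ψ '' V')) (hd : Disjoint (φ '' V') (ψ '' V')) (a : A) (ha : a ∈ V')
    (U : Set E) (hU : U ⊆ φ '' V' ∪ ψ '' V') :
    ∃ H : Subgroup (FundamentalGroup E (φ a)), IsAmenable H ∧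
      ∀ p : Path (φ a) (φ a), (∀ t, p t ∈ U) → pathToPi1 ⟦p⟧ ∈ H := by
  refine amenable_transfer φ V hV a (hVV' ha) U (φ a) (Path.refl _) ?_
  intro p hp
  have hpre : IsPreconnected (Set.range p) := isPreconnected_range p.continuous
  have hsub : Set.range p ⊆ φ '' V' := by
    refine hpre.subset_left_of_subset_union hφo hψo hd ?_ ⟨φ a, ⟨0, p.source⟩, ⟨a, ha, rfl⟩⟩
    rintro _ ⟨t, rfl⟩
    exact hU (hp t)
  obtain ⟨q, hq, rfl⟩ := lift_loop φ hφ V' a p (fun t => hsub ⟨t, rfl⟩)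
  refine ⟨q, fun t => hVV' (hq t), ?_⟩
  rw [← Path.Homotopic.Quotient.eq]
  simp

theorem amenable_union {A E : Type} [TopologicalSpace A] [TopologicalSpace E] (φ ψ : C(A, E))
    (hφ : Topology.IsEmbedding φ) (hψ : Topology.IsEmbedding ψ) (V V' : Set A)
    (hV : AmenableCoverCondition V) (hVV' : V' ⊆ V) (hφo : IsOpen (φ '' V'))
    (hψo : IsOpen (ψ '' V')) (hd : Disjoint (φ '' V') (ψ '' V')) :
    AmenableCoverCondition (φ '' V' ∪ ψ '' V') := by
  rintro _ (⟨a, ha, rfl⟩ | ⟨a, ha, rfl⟩)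
  · exact amenable_image_aux φ ψ hφ V V' hV hVV' hφo hψo hd a ha _ subset_rfl
  · exact amenable_image_aux ψ φ hψ V V' hV hVV' hψo hφo hd.symm a ha _
      (Set.union_comm _ _).subset

section Glue

variable {n : ℕ} {M : OCCManifold n} {f : M.boundary ≃ₜ M.boundary} (D : TwistedDouble M f)

open scoped Classical in
/-- Normal form of a point of `M ⊕ M` for the gluing relation. -/
def glueNF (f : M.boundary ≃ₜ M.boundary) : M.carrier ⊕ M.carrier → M.carrier ⊕ M.carrier
  | Sum.inl a => Sum.inl a
  | Sum.inr b => if h : b ∈ M.boundary then Sum.inl (f.symm ⟨b, h⟩ : M.carrier) else Sum.inr b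

theorem glueNF_eq {a b : M.carrier ⊕ M.carrier}
    (h : Sum.elim D.embp D.embm a = Sum.elim D.embp D.embm b) : glueNF f a = glueNF f b := by
  have h' := (D.identifications a b).1 h
  clear h
  induction h' with
  | rel x y h =>
    obtain ⟨z, rfl, rfl⟩ := h
    simp [glueNF]
  | refl x => rfl
  | symm x y _ ih => exact ih.symm
  | trans x y z _ _ ih1 ih2 => exact ih1.trans ih2

theorem embp_injective : Function.Injective D.embp := by
  intro a b h
  have := glueNF_eq D (a := Sum.inl a) (b := Sum.inl b) h
  exact Sum.inl_injective this

theorem embm_injective : Function.Injective D.embm := by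
  intro a b h
  have := glueNF_eq D (a := Sum.inr a) (b := Sum.inr b) h
  by_cases ha : a ∈ M.boundary <;> by_cases hb : b ∈ M.boundary <;>
    simp [glueNF, ha, hb] at this
  · have h2 := f.symm.injective (Subtype.ext this)
    exact congrArg Subtype.val h2
  · exact this

theorem embp_eq_embm {a b : M.carrier} (h : D.embp a = D.embm b) :
    a ∈ M.boundary ∧ b ∈ M.boundary := by
  have := glueNF_eq D (a := Sum.inl a) (b := Sum.inr b) h
  by_cases hb : b ∈ M.boundary
  · simp [glueNF, hb] at this
    exact ⟨this ▸ Subtype.coe_prop _, hb⟩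
  · simp [glueNF, hb] at this

theorem embm_boundary (z : M.boundary) : D.embm (f z : M.carrier) = D.embp z := by
  exact ((D.identifications (Sum.inl z) (Sum.inr (f z))).2
    (Relation.EqvGen.rel _ _ ⟨z, rfl, rfl⟩)).symm

theorem embp_embedding : Topology.IsEmbedding D.embp := by
  have := M.compact
  have := D.double.t2
  exact (D.embp.continuous.isClosedEmbedding (embp_injective D)).isEmbedding

theorem embm_embedding : Topology.IsEmbedding D.embm := by
  have := M.compact
  have := D.double.t2
  exact (D.embm.continuous.isClosedEmbedding (embm_injective D)).isEmbedding

theorem embp_open {V : Set M.carrier} (hV : IsOpen V) (hb : Disjoint V M.boundary) :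
    IsOpen (D.embp '' V) := by
  rw [← D.quotient.isOpen_preimage]
  have : Sum.elim D.embp D.embm ⁻¹' (D.embp '' V) = Sum.inl '' V := by
    ext x
    rcases x with a | b
    · simp [(embp_injective D).eq_iff]
    · simp only [Set.mem_preimage, Sum.elim_inr, Set.mem_image, reduceCtorEq, and_false,
        exists_false, iff_false, not_exists, not_and]
      intro a ha h
      exact Set.disjoint_left.1 hb ha (embp_eq_embm D h).1
  rw [this]
  exact isOpenMap_inl _ hV

theorem embm_open {V : Set M.carrier} (hV : IsOpen V) (hb : Disjoint V M.boundary) :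
    IsOpen (D.embm '' V) := by
  rw [← D.quotient.isOpen_preimage]
  have : Sum.elim D.embp D.embm ⁻¹' (D.embm '' V) = Sum.inr '' V := by
    ext x
    rcases x with a | b
    · simp only [Set.mem_preimage, Sum.elim_inl, Set.mem_image, reduceCtorEq, and_false,
        exists_false, iff_false, not_exists, not_and]
      intro b hb' h
      exact Set.disjoint_left.1 hb hb' (embp_eq_embm D h.symm).2
    · simp [(embm_injective D).eq_iff]
  rw [this]
  exact isOpenMap_inr _ hV

end Glue

/-- Finite amenable category is realised by a cover. -/
theorem amCat_cover {Z : Type} [TopologicalSpace Z] {m : ℕ} (h : amCat Z + 1 ≤ (m : ℕ∞)) :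
    ∃ V : Fin m → Set Z, (∀ i, IsOpen (V i)) ∧ (∀ y : Z, ∃ i, y ∈ V i) ∧
      ∀ i, AmenableCoverCondition (V i) := by
  have hne : {c : ℕ∞ | ∃ n : ℕ, c = (n : ℕ∞) ∧ ∃ U : Fin (n + 1) → Set Z,
    (∀ i, IsOpen (U i)) ∧ (∀ y : Z, ∃ i, y ∈ U i) ∧
      ∀ i, AmenableCoverCondition (U i)}.Nonempty := by
    by_contra hcon
    rw [Set.not_nonempty_iff_eq_empty] at hcon
    rw [amCat, hcon, sInf_empty, top_add, top_le_iff] at h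
    exact ENat.natCast_ne_top _ h
  obtain ⟨n, hn, U, hUo, hUc, hUa⟩ := csInf_mem hne
  change amCat Z = n at hn
  rw [hn] at h
  have hnm : n + 1 ≤ m := by exact_mod_cast h
  refine ⟨fun i => if h : (i : ℕ) < n + 1 then U ⟨i, h⟩ else ∅, ?_, ?_, ?_⟩
  · intro i
    dsimp only
    split_ifs with h
    · exact hUo _
    · exact isOpen_empty
  · intro y
    obtain ⟨i, hi⟩ := hUc y
    refine ⟨⟨i, i.2.trans_le hnm⟩, ?_⟩
    have hi2 : (i : ℕ) ≤ n := Nat.le_of_lt_succ i.2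
    simpa [hi2] using hi
  · intro i
    dsimp only
    split_ifs with h
    · exact hUa _
    · intro y hy
      exact hy.elim

theorem amCat_le {Z : Type} [TopologicalSpace Z] {m : ℕ} (V : Fin (m + 1) → Set Z)
    (h1 : ∀ i, IsOpen (V i)) (h2 : ∀ y : Z, ∃ i, y ∈ V i)
    (h3 : ∀ i, AmenableCoverCondition (V i)) : amCat Z ≤ m :=
  sInf_le ⟨m, rfl, V, h1, h2, h3⟩

/-- The boundary part of the cover of the twisted double. -/
theorem boundary_cover {n : ℕ} (M : OCCManifold n) (f : M.boundary ≃ₜ M.boundary)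
    (D : TwistedDouble M f) (m : ℕ)
    (hm : ∀ S : {S : Set M.carrier // IsBoundaryComponent M S}, amCat S.1 + 1 ≤ (m : ℕ∞)) :
    ∃ V : Fin m → Set D.double.carrier, (∀ i, IsOpen (V i)) ∧
      (∀ x ∈ M.boundary, ∃ i, D.embp x ∈ V i) ∧ ∀ i, AmenableCoverCondition (V i) := by
  have := M.compact
  have := M.t2
  have := boundary_lpc M
  have := manifold_lpc D.double
  have := manifold_metrizable D.double
  have : CompactSpace M.boundary := isCompact_iff_compactSpace.1 (boundary_closed M).isCompact
  choose V hVo hVc hVa using fun S => amCat_cover (hm S)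
  -- components
  have hcomp : ∀ x : M.boundary, IsBoundaryComponent M (connectedComponentIn M.boundary x) :=
    fun x => ⟨x, x.2, rfl⟩
  have huniq : ∀ (S : {S : Set M.carrier // IsBoundaryComponent M S}) (x : M.carrier),
      x ∈ S.1 → S.1 = connectedComponentIn M.boundary x := by
    rintro ⟨S, y, hy, rfl⟩ x hx
    exact connectedComponentIn_eq hx
  have hSb : ∀ S : {S : Set M.carrier // IsBoundaryComponent M S}, S.1 ⊆ M.boundary := by
    rintro ⟨S, y, hy, rfl⟩
    exact connectedComponentIn_subset _ _
  let W : Fin m → Set M.boundary := fun j =>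
    {x | ∃ (S : {S : Set M.carrier // IsBoundaryComponent M S}) (h : (x : M.carrier) ∈ S.1),
      (⟨x, h⟩ : S.1) ∈ V S j}
  have hWo : ∀ j, IsOpen (W j) := by
    intro j
    have hWe : W j = ⋃ S, Set.inclusion (hSb S) '' (V S j) := by
      ext x
      simp only [Set.mem_iUnion, W]
      constructor
      · rintro ⟨S, h, hx⟩
        exact ⟨S, ⟨x, h⟩, hx, rfl⟩
      · rintro ⟨S, y, hy, rfl⟩
        exact ⟨S, y.2, hy⟩
    rw [hWe]
    refine isOpen_iUnion fun S => ?_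
    have hoe : Topology.IsOpenEmbedding (Set.inclusion (hSb S)) := by
      refine ⟨Topology.IsEmbedding.inclusion _, ?_⟩
      obtain ⟨S, y, hy, rfl⟩ := S
      have : Set.range (Set.inclusion (hSb ⟨_, y, hy, rfl⟩)) =
          connectedComponent (⟨y, hy⟩ : M.boundary) := by
        rw [Set.range_inclusion]
        ext z
        simp only [connectedComponentIn_eq_image hy]
        simp
      rw [this]
      exact isOpen_connectedComponent
    exact hoe.isOpenMap _ (hVo S j)
  have hWc : ⋃ j, W j = Set.univ := by
    rw [Set.eq_univ_iff_forall]
    intro x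
    have hx : (x : M.carrier) ∈ connectedComponentIn M.boundary x :=
      mem_connectedComponentIn x.2
    obtain ⟨j, hj⟩ := hVc ⟨_, hcomp x⟩ ⟨x, hx⟩
    exact Set.mem_iUnion.2 ⟨j, ⟨_, hcomp x⟩, hx, hj⟩
  obtain ⟨K, hKc, hKcl, hKW⟩ := exists_iUnion_eq_closed_subset hWo (fun x => Set.toFinite _) hWc
  let φ : C(M.boundary, D.double.carrier) := D.embp.comp ⟨Subtype.val, continuous_subtype_val⟩
  have hφ : Topology.IsEmbedding φ := (embp_embedding D).comp Topology.IsEmbedding.subtypeVal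
  choose U hUo hKU hU using fun j => thicken_metrizable φ hφ (manifold_htpyUnique D.double) (K j)
    (W j) (hKcl j).isCompact (hKW j) (hWo j)
  refine ⟨U, hUo, ?_, ?_⟩
  · intro x hx
    have : (⟨x, hx⟩ : M.boundary) ∈ ⋃ j, K j := hKc ▸ Set.mem_univ _
    obtain ⟨j, hj⟩ := Set.mem_iUnion.1 this
    exact ⟨j, hKU j ⟨_, hj, rfl⟩⟩
  · intro j y hy
    obtain ⟨b, ⟨S, hbS, hbV⟩, γ, hγ⟩ := hU j y hy
    let ψ : C(S.1, D.double.carrier) := D.embp.comp ⟨Subtype.val, continuous_subtype_val⟩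
    refine amenable_transfer ψ (V S j) (hVa S j) ⟨b, hbS⟩ hbV (U j) y γ ?_
    intro p hp
    obtain ⟨q, hqW, hq⟩ := hγ p hp
    have hqS : ∀ t, (q t : M.carrier) ∈ S.1 := by
      intro t
      rw [huniq S b hbS]
      have hpre : IsPreconnected (Set.range fun t => (q t : M.carrier)) :=
        isPreconnected_range (continuous_subtype_val.comp q.continuous)
      refine hpre.subset_connectedComponentIn ⟨0, by simp⟩ ?_ ⟨t, rfl⟩
      rintro _ ⟨s, rfl⟩
      exact (q s).2
    let q' : Path (⟨b, hbS⟩ : S.1) ⟨b, hbS⟩ :=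
      ⟨⟨fun t => ⟨q t, hqS t⟩, by fun_prop⟩, by simp, by simp⟩
    refine ⟨q', ?_, hq⟩
    intro t
    obtain ⟨S', h', hVq⟩ := hqW t
    have hSS : S' = S := Subtype.ext ((huniq S' _ h').trans (huniq S _ (hqS t)).symm)
    subst hSS
    exact hVq

/-- **Amenable category of twisted doubles (sum version).**
Let `M` be an oriented compact connected `n`-manifold with non-empty boundary all of whose
boundary components are `π₁`-injective, and let `f : ∂M → ∂M` be an orientation-preserving
homeomorphism.  Then
`cat_Am(D_f(M)) ≤ cat_Am(M) + max_i (cat_Am(S_i) + 1)`, the maximum running over the boundary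
components `S_i` of `M`. -/
theorem amCat_twisted_double_sum (n : ℕ) (M : OCCManifold n) (hbd : M.boundary.Nonempty)
    (h1 : ∀ S : Set M.carrier, IsBoundaryComponent M S → Pi1Injective S)
    (f : M.boundary ≃ₜ M.boundary) (hf : OrientationCompatible 1 M M f)
    (D : TwistedDouble M f) :
    amCat D.double.carrier ≤ amCat M.carrier +
      ⨆ S : {S : Set M.carrier // IsBoundaryComponent M S}, (amCat S.1 + 1) := by
  by_cases htop : amCat M.carrier +
      ⨆ S : {S : Set M.carrier // IsBoundaryComponent M S}, (amCat S.1 + 1) = ⊤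
  · rw [htop]
    exact le_top
  rw [ENat.add_eq_top, not_or] at htop
  obtain ⟨k, hk⟩ := ENat.ne_top_iff_exists.1 htop.1
  obtain ⟨m, hm⟩ := ENat.ne_top_iff_exists.1 htop.2
  obtain ⟨A, hAo, hAc, hAa⟩ := amCat_cover (Z := M.carrier) (m := k + 1) (by
    rw [← hk]
    push_cast
    exact le_rfl)
  obtain ⟨B, hBo, hBc, hBa⟩ := boundary_cover M f D m (fun S => by
    rw [hm]
    exact le_iSup (fun S : {S : Set M.carrier // IsBoundaryComponent M S} => amCat S.1 + 1) S)
  rw [← hk, ← hm, ← Nat.cast_add]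
  have hcl := boundary_closed M
  have hdis : ∀ i, Disjoint (A i \ M.boundary) M.boundary := fun i => Set.disjoint_sdiff_left
  let C : Fin (k + 1) ⊕ Fin m → Set D.double.carrier := Sum.elim
    (fun i => D.embp '' (A i \ M.boundary) ∪ D.embm '' (A i \ M.boundary)) B
  have hCo : ∀ i, IsOpen (C i) := by
    rintro (i | j)
    · exact (embp_open D ((hAo i).sdiff hcl) (hdis i)).union
        (embm_open D ((hAo i).sdiff hcl) (hdis i))
    · exact hBo j
  have hCa : ∀ i, AmenableCoverCondition (C i) := by
    rintro (i | j)
    · refine amenable_union D.embp D.embm (embp_embedding D) (embm_embedding D) (A i) _ (hAa i)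
        Set.sdiff_subset (embp_open D ((hAo i).sdiff hcl) (hdis i))
        (embm_open D ((hAo i).sdiff hcl) (hdis i)) ?_
      rw [Set.disjoint_left]
      rintro _ ⟨a, ha, rfl⟩ ⟨b, hb, hab⟩
      exact ha.2 (embp_eq_embm D hab.symm).1
    · exact hBa j
  have hCc : ∀ y, ∃ i, y ∈ C i := by
    intro y
    obtain ⟨a | a, rfl⟩ := D.quotient.surjective y
    · by_cases ha : a ∈ M.boundary
      · obtain ⟨j, hj⟩ := hBc a ha
        exact ⟨Sum.inr j, hj⟩
      · obtain ⟨i, hi⟩ := hAc a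
        exact ⟨Sum.inl i, Or.inl ⟨a, ⟨hi, ha⟩, rfl⟩⟩
    · by_cases ha : a ∈ M.boundary
      · obtain ⟨j, hj⟩ := hBc (f.symm ⟨a, ha⟩) (f.symm ⟨a, ha⟩).2
        refine ⟨Sum.inr j, ?_⟩
        rw [← embm_boundary D] at hj
        simpa [C] using hj
      · obtain ⟨i, hi⟩ := hAc a
        exact ⟨Sum.inl i, Or.inr ⟨a, ⟨hi, ha⟩, rfl⟩⟩
  let e : Fin (k + m + 1) ≃ Fin (k + 1) ⊕ Fin m :=
    (finCongr (by omega)).trans finSumFinEquiv.symm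
  refine amCat_le (fun i => C (e i)) (fun i => hCo _) ?_ (fun i => hCa _)
  intro y
  obtain ⟨i, hi⟩ := hCc y
  exact ⟨e.symm i, by simpa using hi⟩

end
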